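/- arXiv:2305.08463 — 4 statements merged into one kernel-verified Lean document; each statement's English description precedes it below -/
import Mathlib

section
/- Under Assumptions RS and QM, for every constant C₁ > 0 there exists a constant C₂ > 0 such that every u ∈ [0,∞) with K̂(u) ≥ C₁ satisfies Ǩ(u) ≥ C₂; that is, {u ∈ [0,∞) : K̂(u) ≥ C₁} ⊆ {u ∈ [0,∞) : Ǩ(u) ≥ C₂}. -/
open Set Filter Topology MeasureTheory
open scoped BigOperators RealInnerProductSpace

noncomputable section

/-- Euclidean space `ℝ^d`. -/
abbrev Euc (d : ℕ) := EuclideanSpace ℝ (Fin d)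

/-- The convex subdifferential of a function `g` (viewed as a function on `[0,∞)`) at `u`. -/
def subdiffIci (g : ℝ → ℝ) (u : ℝ) : Set ℝ :=
  {c : ℝ | ∀ v ∈ Set.Ici (0:ℝ), g v - g u ≥ c * (v - u)}

/-- Assumption RS: the kernel `K` is bounded, continuous, non-negative, normalized, and
radially symmetric with profile `Khat`. -/
structure AssumptionRS (d : ℕ) (K : Euc d → ℝ) (Khat : ℝ → ℝ) : Prop where
  bounded : ∃ M : ℝ, ∀ x, K x ≤ M
  cont : Continuous K
  nonneg : ∀ x, 0 ≤ K x
  normalized : ∫ x, K x = 1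
  radial : ∀ x, K x = Khat (‖x‖ ^ 2 / 2)

/-- Assumption QM for the profile `Khat`, together with the selection `Kcheck`:
`Khat` is convex and non-increasing on `[0,∞)`, its right derivative at `0` exists as a real
number and equals `-(Kcheck 0)` (i.e. `Kcheck 0 = -Khat'(0+) > -∞`), and for every `u > 0`,
`-(Kcheck u)` belongs to the subdifferential of `Khat` at `u`. -/
structure AssumptionQM (Khat Kcheck : ℝ → ℝ) : Prop where
  convexOn : ConvexOn ℝ (Set.Ici (0:ℝ)) Khat
  antitoneOn : AntitoneOn Khat (Set.Ici (0:ℝ))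
  rderiv0 : Filter.Tendsto (fun v => (Khat v - Khat 0) / v)
      (nhdsWithin 0 (Set.Ioi 0)) (nhds (-(Kcheck 0)))
  subdiff : ∀ u : ℝ, 0 < u → -(Kcheck u) ∈ subdiffIci Khat u

/-- Under Assumptions RS and QM, for every `C₁ > 0` there exists `C₂ > 0` such that
`{u ∈ [0,∞) : K̂(u) ≥ C₁} ⊆ {u ∈ [0,∞) : Ǩ(u) ≥ C₂}`. -/
theorem khat_level_subset_kcheck_level
    (d : ℕ) (hd : 0 < d) (K : Euc d → ℝ) (Khat Kcheck : ℝ → ℝ)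
    (hRS : AssumptionRS d K Khat) (hQM : AssumptionQM Khat Kcheck) :
    ∀ C₁ : ℝ, 0 < C₁ → ∃ C₂ : ℝ, 0 < C₂ ∧
      {u : ℝ | 0 ≤ u ∧ C₁ ≤ Khat u} ⊆ {u : ℝ | 0 ≤ u ∧ C₂ ≤ Kcheck u} := by
  intro C₁ hC
  have hex : ∃ w : ℝ, 0 ≤ w ∧ Khat w < C₁ / 2 := by
    by_contra hcon
    push Not at hcon
    have hint : Integrable K := by
      by_contra hni
      have h1 := hRS.normalized
      rw [integral_undef hni] at h1
      exact zero_ne_one h1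
    have hconst : Integrable (fun _ : Euc d => C₁ / 2) := by
      refine hint.mono' aestronglyMeasurable_const (Filter.Eventually.of_forall fun x => ?_)
      rw [Real.norm_of_nonneg (by positivity), hRS.radial]
      exact hcon _ (by positivity)
    have : Nonempty (Fin d) := ⟨⟨0, hd⟩⟩
    rw [integrable_const_iff] at hconst
    rcases hconst with h | h
    · linarith
    · have h2 := h.measure_univ_lt_top
      rw [measure_univ_of_isAddLeftInvariant] at h2
      exact lt_irrefl _ h2
  obtain ⟨w, hw0, hw⟩ := hex
  refine ⟨C₁ / 2 / (w + 1), by positivity, ?_⟩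
  rintro u ⟨hu0, hu⟩
  refine ⟨hu0, ?_⟩
  have huw : u < w := by
    by_contra h
    have := hQM.antitoneOn (Set.mem_Ici.2 hw0) (Set.mem_Ici.2 hu0) (not_lt.1 h)
    linarith
  have key : Khat u - Khat w ≤ Kcheck u * (w - u) := by
    rcases hu0.eq_or_lt with h0 | hpos
    · subst h0
      have hle : -(Kcheck 0) ≤ (Khat w - Khat 0) / w := by
        refine le_of_tendsto hQM.rderiv0 ?_
        filter_upwards [Ioo_mem_nhdsGT huw] with v hv
        have hc := hQM.convexOn.2 (Set.mem_Ici.2 le_rfl) (Set.mem_Ici.2 hw0)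
          (show 0 ≤ 1 - v / w by rw [sub_nonneg, div_le_one huw]; exact hv.2.le)
          (show 0 ≤ v / w from div_nonneg hv.1.le hw0) (by ring)
        simp only [smul_eq_mul, mul_zero, zero_add] at hc
        rw [div_mul_cancel₀ _ huw.ne'] at hc
        rw [div_le_iff₀ hv.1]
        calc Khat v - Khat 0 ≤ (1 - v / w) * Khat 0 + v / w * Khat w - Khat 0 := by linarith
          _ = _ := by ring
      rw [le_div_iff₀ huw] at hle
      linarith
    · have := hQM.subdiff u hpos w hw0
      linarith
  rw [div_le_iff₀ (by positivity)]
  have hk : 0 < Kcheck u := by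
    by_contra h
    nlinarith [mul_nonneg (sub_nonneg.2 (not_lt.1 h)) (sub_nonneg.2 huw.le)]
  nlinarith [mul_nonneg hk.le hu0]
end
end

section
/- Assume Assumptions RS and QM. For the mode estimate sequence (y_t)_{t∈ℕ} obtained by the MS iteration starting from any y₁ ∈ ℝ^d, the density estimate sequence (f(y_t))_{t∈ℕ} is non-decreasing (f(y_t) ≤ f(y_{t+1}) for all t) and converges. -/
open Set Filter Topology MeasureTheory
open scoped BigOperators RealInnerProductSpace

noncomputable section

/-- The kernel density estimate `f(y) = (1/(n hᵈ)) ∑ᵢ K((y - xᵢ)/h)`. -/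
def KDE (d n : ℕ) (K : Euc d → ℝ) (x : Fin n → Euc d) (h : ℝ) (y : Euc d) : ℝ :=
  (1 / ((n : ℝ) * h ^ d)) * ∑ i : Fin n, K (h⁻¹ • (y - x i))

/-- `f̌(y) = (1/(n hᵈ)) ∑ᵢ Ǩ(‖(y - xᵢ)/h‖²/2)`. -/
def fcheck (d n : ℕ) (Kcheck : ℝ → ℝ) (x : Fin n → Euc d) (h : ℝ) (y : Euc d) : ℝ :=
  (1 / ((n : ℝ) * h ^ d)) * ∑ i : Fin n, Kcheck (‖h⁻¹ • (y - x i)‖ ^ 2 / 2)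

/-- The mean shift vector `m(y)`: zero if `f̌(y) = 0`, and otherwise
`m(y) = ∑ᵢ Ǩ(‖(y - xᵢ)/h‖²/2)(xᵢ - y) / ∑ᵢ Ǩ(‖(y - xᵢ)/h‖²/2)`. -/
def msMap (d n : ℕ) (Kcheck : ℝ → ℝ) (x : Fin n → Euc d) (h : ℝ) (y : Euc d) : Euc d :=
  if fcheck d n Kcheck x h y = 0 then 0
  else (∑ i : Fin n, Kcheck (‖h⁻¹ • (y - x i)‖ ^ 2 / 2))⁻¹ •
    ∑ i : Fin n, Kcheck (‖h⁻¹ • (y - x i)‖ ^ 2 / 2) • (x i - y)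

/-- `y` is a mean shift iteration sequence: `y (t+1) = y t + m (y t)` for all `t`. -/
def MSSeq (d n : ℕ) (Kcheck : ℝ → ℝ) (x : Fin n → Euc d) (h : ℝ) (y : ℕ → Euc d) : Prop :=
  ∀ t : ℕ, y (t + 1) = y t + msMap d n Kcheck x h (y t)

/-- `f` has the Łojasiewicz property on the set `S`. -/
def LojasiewiczOn (d : ℕ) (f : Euc d → ℝ) (S : Set (Euc d)) : Prop :=
  ∃ ε > (0:ℝ), ∃ c > (0:ℝ), ∃ θ ∈ Set.Ico (0:ℝ) 1,
    ∀ x' ∈ S, ∀ x ∈ S, ‖x' - x‖ < ε → 0 ≤ f x' - f x →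
      ‖gradient f x‖ ≥ c * (f x' - f x) ^ θ

/-- `f` satisfies the Łojasiewicz inequality at `ybar` with exponent `θ`, on the set `S`. -/
def LojasiewiczAtWith (d : ℕ) (f : Euc d → ℝ) (S : Set (Euc d)) (ybar : Euc d) (θ : ℝ) : Prop :=
  ∃ ε > (0:ℝ), ∃ c > (0:ℝ),
    ∀ y ∈ S, ‖ybar - y‖ < ε → 0 ≤ f ybar - f y →
      ‖gradient f y‖ ≥ c * (f ybar - f y) ^ θ

theorem qm_subgrad (Khat Kcheck : ℝ → ℝ) (hQM : AssumptionQM Khat Kcheck)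
    (u v : ℝ) (hu : 0 ≤ u) (hv : 0 ≤ v) :
    -(Kcheck u) * (v - u) ≤ Khat v - Khat u := by
  rcases hu.eq_or_lt with rfl | hu
  · rcases hv.eq_or_lt with rfl | hv
    · simp
    · have key : -(Kcheck 0) ≤ (Khat v - Khat 0) / v := by
        refine le_of_tendsto hQM.rderiv0 ?_
        have : Ioo (0:ℝ) v ∈ 𝓝[>] (0:ℝ) := Ioo_mem_nhdsGT hv
        filter_upwards [this] with w hw
        have := hQM.convexOn.secant_mono (a := 0) (x := w) (y := v) (by simp)
          (by simpa using hw.1.le) (by simpa using hv.le) hw.1.ne' hv.ne' hw.2.le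
        simpa using this
      rw [le_div_iff₀ hv] at key
      simpa using key
  · exact hQM.subdiff u hu v hv

theorem qm_nonneg (Khat Kcheck : ℝ → ℝ) (hQM : AssumptionQM Khat Kcheck)
    (u : ℝ) (hu : 0 ≤ u) : 0 ≤ Kcheck u := by
  have h1 := qm_subgrad Khat Kcheck hQM u (u + 1) hu (by linarith)
  have h2 := hQM.antitoneOn (a := u) (b := u + 1) hu
    (by simp only [mem_Ici]; linarith) (by linarith)
  nlinarith

theorem ms_step (d n : ℕ) 
    (K : Euc d → ℝ) (Khat Kcheck : ℝ → ℝ)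
    (hRS : AssumptionRS d K Khat) (hQM : AssumptionQM Khat Kcheck)
    (x : Fin n → Euc d) (h : ℝ) (hh : 0 < h) (y : Euc d) :
    KDE d n K x h y ≤ KDE d n K x h (y + msMap d n Kcheck x h y) := by
  by_cases hf : fcheck d n Kcheck x h y = 0
  · simp [msMap, hf]
  set m := msMap d n Kcheck x h y with hm
  set k : Fin n → ℝ := fun i => Kcheck (‖h⁻¹ • (y - x i)‖ ^ 2 / 2) with hk
  have hS : ∑ i, k i ≠ 0 := by
    intro h0
    apply hf
    unfold fcheck
    rw [show (∑ i : Fin n, Kcheck (‖h⁻¹ • (y - x i)‖ ^ 2 / 2)) = 0 from h0, mul_zero]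
  have hSm : (∑ i, k i) • m = ∑ i, k i • (x i - y) := by
    rw [hm, msMap, if_neg hf, smul_smul, mul_inv_cancel₀ hS, one_smul]
  have hk0 : ∀ i, 0 ≤ k i := fun i => qm_nonneg Khat Kcheck hQM _ (by positivity)
  have hin : ∑ i, k i * ⟪m, y - x i⟫ = -((∑ i, k i) * ‖m‖ ^ 2) := by
    have h1 : ⟪m, (∑ i, k i) • m⟫ = ⟪m, ∑ i, k i • (x i - y)⟫ := by rw [hSm]
    rw [inner_smul_right, real_inner_self_eq_norm_sq, inner_sum] at h1
    rw [h1, ← Finset.sum_neg_distrib]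
    refine Finset.sum_congr rfl fun i _ => ?_
    rw [inner_smul_right, ← neg_sub y (x i), inner_neg_right]
    ring
  unfold KDE
  refine mul_le_mul_of_nonneg_left ?_ (by positivity)
  rw [← sub_nonneg, ← Finset.sum_sub_distrib]
  have hterm : ∀ i, -(h⁻¹ ^ 2 / 2) * (k i * ‖m‖ ^ 2 + 2 * (k i * ⟪m, y - x i⟫)) ≤
      K (h⁻¹ • (y + m - x i)) - K (h⁻¹ • (y - x i)) := by
    intro i
    rw [hRS.radial, hRS.radial]
    refine le_trans (le_of_eq ?_) (qm_subgrad Khat Kcheck hQM _ _ (by positivity) (by positivity))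
    have e : y + m - x i = m + (y - x i) := by abel
    have hn2 := norm_add_sq_real m (y - x i)
    change _ = -(k i) * _
    rw [e, norm_smul, norm_smul, mul_pow, mul_pow, hn2, Real.norm_eq_abs, sq_abs]
    ring
  refine le_trans ?_ (Finset.sum_le_sum fun i _ => hterm i)
  rw [← Finset.mul_sum, Finset.sum_add_distrib, ← Finset.mul_sum, hin, ← Finset.sum_mul]
  have : 0 ≤ ∑ i, k i := Finset.sum_nonneg fun i _ => hk0 i
  have h3 : 0 ≤ h⁻¹ ^ 2 / 2 * ((∑ i, k i) * ‖m‖ ^ 2) := by positivity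
  linarith

/-- Under Assumptions RS and QM, for the mode estimate sequence `(y t)` obtained by
the MS iteration from any starting point, the density estimate sequence `(f (y t))` is
non-decreasing and converges. -/
theorem ms_density_ascent_and_convergence
    (d n : ℕ) (hd : 0 < d) (hn : 0 < n)
    (K : Euc d → ℝ) (Khat Kcheck : ℝ → ℝ)
    (hRS : AssumptionRS d K Khat) (hQM : AssumptionQM Khat Kcheck)
    (x : Fin n → Euc d) (h : ℝ) (hh : 0 < h)
    (y : ℕ → Euc d) (hy : MSSeq d n Kcheck x h y) :
    (∀ t : ℕ, KDE d n K x h (y t) ≤ KDE d n K x h (y (t + 1))) ∧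
    ∃ c : ℝ, Filter.Tendsto (fun t : ℕ => KDE d n K x h (y t)) Filter.atTop (nhds c) := by
  have hmono : ∀ t : ℕ, KDE d n K x h (y t) ≤ KDE d n K x h (y (t + 1)) := by
    intro t
    rw [hy t]
    exact ms_step d n K Khat Kcheck hRS hQM x h hh (y t)
  refine ⟨hmono, _, tendsto_atTop_ciSup (monotone_nat_of_le_succ hmono) ?_⟩
  obtain ⟨M, hM⟩ := hRS.bounded
  refine ⟨(1 / ((n : ℝ) * h ^ d)) * ∑ _i : Fin n, M, ?_⟩
  rintro _ ⟨t, rfl⟩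
  exact mul_le_mul_of_nonneg_left (Finset.sum_le_sum fun i _ => hM _) (by positivity)
end
end

section
/- Assume Assumptions RS and QM, and let (y_t)_{t∈ℕ} be the mode estimate sequence obtained by the MS iteration starting from y₁ with f(y₁) > 0. Then there exists a constant ā > 0 such that the sufficient-increase condition f(y_{t+1}) − f(y_t) ≥ ā·‖y_{t+1} − y_t‖² holds for every t ∈ ℕ; moreover one can take ā = C/(2 n h^{d+2}) where C > 0 is any constant with f̌(y_t) ≥ C/(n h^d) for all t. -/
open Set Filter Topology MeasureTheory
open scoped BigOperators RealInnerProductSpace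

noncomputable section

theorem aux_subdiff {Khat Kcheck : ℝ → ℝ} (hQM : AssumptionQM Khat Kcheck)
    (u v : ℝ) (hu : 0 ≤ u) (hv : 0 ≤ v) :
    -(Kcheck u) * (v - u) ≤ Khat v - Khat u := by
  rcases hu.eq_or_lt with rfl | hu
  · rcases hv.eq_or_lt with rfl | hv
    · simp
    · have key : -(Kcheck 0) ≤ (Khat v - Khat 0) / v := by
        refine le_of_tendsto hQM.rderiv0 ?_
        have h1 : Set.Ioo (0:ℝ) v ∈ nhdsWithin (0:ℝ) (Set.Ioi 0) := Ioo_mem_nhdsGT hv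
        filter_upwards [h1] with w hw
        have := hQM.convexOn.secant_mono (a := 0) (x := w) (y := v) (by simp)
          (Set.mem_Ici.2 hw.1.le) (Set.mem_Ici.2 hv.le) hw.1.ne' hv.ne' hw.2.le
        simpa using this
      rw [le_div_iff₀ hv] at key
      simpa using key
  · exact hQM.subdiff u hu v hv

theorem aux_nonneg {Khat Kcheck : ℝ → ℝ} (hQM : AssumptionQM Khat Kcheck)
    (u : ℝ) (hu : 0 ≤ u) : 0 ≤ Kcheck u := by
  have h1 := aux_subdiff hQM u (u + 1) hu (by linarith)
  have h2 := hQM.antitoneOn (Set.mem_Ici.2 hu) (Set.mem_Ici.2 (by linarith : 0 ≤ u + 1))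
    (by linarith)
  nlinarith

theorem aux_step
    (d n : ℕ) (hn : 0 < n)
    (K : Euc d → ℝ) (Khat Kcheck : ℝ → ℝ)
    (hRS : AssumptionRS d K Khat) (hQM : AssumptionQM Khat Kcheck)
    (x : Fin n → Euc d) (h : ℝ) (hh : 0 < h) (z : Euc d) :
    fcheck d n Kcheck x h z / (2 * h ^ 2) * ‖msMap d n Kcheck x h z‖ ^ 2 ≤
      KDE d n K x h (z + msMap d n Kcheck x h z) - KDE d n K x h z := by
  by_cases h0 : fcheck d n Kcheck x h z = 0
  · simp [msMap, h0]
  set m := msMap d n Kcheck x h z with hm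
  set w : Fin n → ℝ := fun i => Kcheck (‖h⁻¹ • (z - x i)‖ ^ 2 / 2) with hw
  have hn' : (0:ℝ) < n := by exact_mod_cast hn
  have hc : 0 < 1 / ((n:ℝ) * h ^ d) := by positivity
  have hf : fcheck d n Kcheck x h z = 1 / ((n:ℝ) * h ^ d) * ∑ i, w i := rfl
  have hS : ∑ i, w i ≠ 0 := by
    intro h1; apply h0; rw [hf, h1, mul_zero]
  have hmS : ∑ i, w i • (x i - z) = (∑ i, w i) • m := by
    rw [hm, msMap, if_neg h0, smul_smul, mul_inv_cancel₀ hS, one_smul]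
  have hin : ∑ i, w i * ⟪x i - z, m⟫ = (∑ i, w i) * ‖m‖ ^ 2 := by
    have := congrArg (fun v : Euc d => ⟪v, m⟫) hmS
    simp only [sum_inner, real_inner_smul_left, real_inner_self_eq_norm_sq] at this
    exact this
  have hi : ∀ i, w i * (2 * ⟪x i - z, m⟫ - ‖m‖ ^ 2) / (2 * h ^ 2) ≤
      K (h⁻¹ • (z + m - x i)) - K (h⁻¹ • (z - x i)) := by
    intro i
    rw [hRS.radial, hRS.radial]
    refine le_trans (le_of_eq ?_) (aux_subdiff hQM (‖h⁻¹ • (z - x i)‖ ^ 2 / 2) _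
      (by positivity) (by positivity))
    have e : z + m - x i = m - (x i - z) := by abel
    have e2 : ‖z - x i‖ = ‖x i - z‖ := norm_sub_rev _ _
    have e3 : ‖z + m - x i‖ ^ 2 = ‖m‖ ^ 2 - 2 * ⟪x i - z, m⟫ + ‖x i - z‖ ^ 2 := by
      rw [e, norm_sub_sq_real, real_inner_comm]
    change w i * _ / _ = - w i * _
    simp only [norm_smul, mul_pow, e3, e2, norm_inv, Real.norm_eq_abs, abs_of_pos hh]
    field_simp
    ring
  have hsum := Finset.sum_le_sum (fun i (_ : i ∈ Finset.univ) => hi i)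
  rw [← Finset.sum_div, Finset.sum_sub_distrib] at hsum
  have e4 : ∑ i, w i * (2 * ⟪x i - z, m⟫ - ‖m‖ ^ 2) = (∑ i, w i) * ‖m‖ ^ 2 := by
    have : ∀ i, w i * (2 * ⟪x i - z, m⟫ - ‖m‖ ^ 2)
        = 2 * (w i * ⟪x i - z, m⟫) - w i * ‖m‖ ^ 2 := fun i => by ring
    simp only [this, Finset.sum_sub_distrib, ← Finset.mul_sum, ← Finset.sum_mul, hin]
    ring
  rw [e4] at hsum
  have := mul_le_mul_of_nonneg_left hsum hc.le
  rw [hf, KDE, KDE, ← mul_sub]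
  refine le_trans (le_of_eq ?_) this
  ring

theorem aux_small (d : ℕ) (hd : 0 < d) (K : Euc d → ℝ) (Khat : ℝ → ℝ)
    (hRS : AssumptionRS d K Khat) (ε : ℝ) (hε : 0 < ε) : ∃ v, 0 ≤ v ∧ Khat v < ε := by
  by_contra! hcon
  have hint : Integrable K := by
    by_contra hni
    have := hRS.normalized
    rw [integral_undef hni] at this
    exact zero_ne_one this
  have hconst : Integrable (fun _ : Euc d => ε) := by
    refine hint.mono' aestronglyMeasurable_const (Filter.Eventually.of_forall fun z => ?_)
    rw [Real.norm_eq_abs, abs_of_pos hε, hRS.radial]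
    exact hcon _ (by positivity)
  haveI : Nonempty (Fin d) := ⟨⟨0, hd⟩⟩
  rw [integrable_const_iff] at hconst
  rcases hconst with h1 | h1
  · exact hε.ne' h1
  · have h2 := h1.measure_univ_lt_top
    rw [MeasureTheory.measure_univ_of_isAddLeftInvariant] at h2
    exact lt_irrefl _ h2

/-- Under Assumptions RS and QM, starting from `y 0` with `f (y 0) > 0`, there is
`ā > 0` with the sufficient-increase condition `f(y_{t+1}) − f(y_t) ≥ ā‖y_{t+1} − y_t‖²` for all
`t`; moreover one can take `ā = C/(2 n h^{d+2})` for any `C > 0` with `f̌(y_t) ≥ C/(n hᵈ)` for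
all `t`. -/
theorem ms_sufficient_increase
    (d n : ℕ) (hd : 0 < d) (hn : 0 < n)
    (K : Euc d → ℝ) (Khat Kcheck : ℝ → ℝ)
    (hRS : AssumptionRS d K Khat) (hQM : AssumptionQM Khat Kcheck)
    (x : Fin n → Euc d) (h : ℝ) (hh : 0 < h)
    (y : ℕ → Euc d) (hy : MSSeq d n Kcheck x h y)
    (hy0 : 0 < KDE d n K x h (y 0)) :
    (∃ abar : ℝ, 0 < abar ∧ ∀ t : ℕ,
        abar * ‖y (t + 1) - y t‖ ^ 2 ≤ KDE d n K x h (y (t + 1)) - KDE d n K x h (y t)) ∧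
    ∀ C : ℝ, 0 < C → (∀ t : ℕ, C / ((n : ℝ) * h ^ d) ≤ fcheck d n Kcheck x h (y t)) →
      ∀ t : ℕ,
        C / (2 * (n : ℝ) * h ^ (d + 2)) * ‖y (t + 1) - y t‖ ^ 2 ≤
          KDE d n K x h (y (t + 1)) - KDE d n K x h (y t) := by
  have hn' : (0:ℝ) < n := by exact_mod_cast hn
  have hstep : ∀ t, fcheck d n Kcheck x h (y t) / (2 * h ^ 2) * ‖y (t + 1) - y t‖ ^ 2 ≤
      KDE d n K x h (y (t + 1)) - KDE d n K x h (y t) := by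
    intro t
    have := aux_step d n hn K Khat Kcheck hRS hQM x h hh (y t)
    rw [← hy t] at this
    have e : y (t + 1) - y t = msMap d n Kcheck x h (y t) := by rw [hy t]; abel
    rwa [e]
  have hmain : ∀ C : ℝ, 0 < C →
      (∀ t : ℕ, C / ((n : ℝ) * h ^ d) ≤ fcheck d n Kcheck x h (y t)) →
      ∀ t : ℕ,
        C / (2 * (n : ℝ) * h ^ (d + 2)) * ‖y (t + 1) - y t‖ ^ 2 ≤
          KDE d n K x h (y (t + 1)) - KDE d n K x h (y t) := by
    intro C hC hCf t
    refine le_trans (mul_le_mul_of_nonneg_right ?_ (sq_nonneg _)) (hstep t)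
    have e : C / (2 * (n : ℝ) * h ^ (d + 2)) = C / ((n : ℝ) * h ^ d) / (2 * h ^ 2) := by
      rw [div_div]; congr 1; ring
    rw [e]
    exact div_le_div_of_nonneg_right (hCf t) (by positivity)
  refine ⟨?_, hmain⟩
  have hw0 : ∀ z i, 0 ≤ Kcheck (‖h⁻¹ • (z - x i)‖ ^ 2 / 2) :=
    fun z i => aux_nonneg hQM _ (by positivity)
  have hmono : Monotone fun t => KDE d n K x h (y t) := by
    refine monotone_nat_of_le_succ fun t => ?_
    have h1 := hstep t
    have h2 : 0 ≤ fcheck d n Kcheck x h (y t) :=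
      mul_nonneg (by positivity) (Finset.sum_nonneg fun i _ => hw0 _ i)
    have h3 : 0 ≤ fcheck d n Kcheck x h (y t) / (2 * h ^ 2) * ‖y (t + 1) - y t‖ ^ 2 := by
      positivity
    linarith
  set F := KDE d n K x h (y 0) * h ^ d with hF
  have hFpos : 0 < F := by positivity
  obtain ⟨v, hv, hvF⟩ := aux_small d hd K Khat hRS (F / 2) (by positivity)
  have hCpos : 0 < F / (2 * (v + 1)) := by positivity
  refine ⟨_, ?_, hmain (F / (2 * (v + 1))) hCpos ?_⟩
  · positivity
  intro t
  have hex : ∃ i, F ≤ K (h⁻¹ • (y t - x i)) := by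
    by_contra! hcon
    have h1 : ∑ i, K (h⁻¹ • (y t - x i)) < ∑ _i : Fin n, F :=
      Finset.sum_lt_sum_of_nonempty ⟨⟨0, hn⟩, Finset.mem_univ _⟩ fun i _ => hcon i
    have h2 : KDE d n K x h (y 0) ≤ KDE d n K x h (y t) := hmono (Nat.zero_le t)
    have h3 : KDE d n K x h (y t) < 1 / ((n:ℝ) * h ^ d) * ∑ _i : Fin n, F :=
      mul_lt_mul_of_pos_left h1 (by positivity)
    have h4 : 1 / ((n:ℝ) * h ^ d) * ∑ _i : Fin n, F = KDE d n K x h (y 0) := by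
      simp only [Finset.sum_const, Finset.card_univ, Fintype.card_fin, nsmul_eq_mul, hF]
      field_simp
    linarith
  obtain ⟨i, hi⟩ := hex
  rw [hRS.radial] at hi
  set u := ‖h⁻¹ • (y t - x i)‖ ^ 2 / 2 with hu
  have hu0 : 0 ≤ u := by positivity
  have hsub := aux_subdiff hQM u v hu0 hv
  have hk0 := aux_nonneg hQM u hu0
  have hKu : F / (2 * (v + 1)) ≤ Kcheck u := by
    rw [div_le_iff₀ (by positivity)]
    nlinarith [mul_nonneg hk0 hu0]
  have hle : Kcheck u ≤ ∑ j, Kcheck (‖h⁻¹ • (y t - x j)‖ ^ 2 / 2) :=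
    Finset.single_le_sum (f := fun j => Kcheck (‖h⁻¹ • (y t - x j)‖ ^ 2 / 2))
      (fun j _ => hw0 _ j) (Finset.mem_univ i)
  rw [fcheck, one_div_mul_eq_div]
  exact div_le_div_of_nonneg_right (hKu.trans hle) (by positivity)
end
end

section
/- Assume Assumptions RS and QM, that the kernel K is differentiable on ℝ^d, and let y ∈ ℝ^d satisfy f̌(y) ≠ 0. Then the KDE f is differentiable at y and the MS update is a gradient ascent step with adaptive step size: m(y) = (h²/f̌(y))·∇f(y), i.e. y + m(y) = y + (h²/f̌(y))·∇f(y). -/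
open Set Filter Topology MeasureTheory
open scoped BigOperators RealInnerProductSpace

noncomputable section

/-- The kernel has derivative `-Kcheck(‖z‖²/2) ⟨z, ·⟩` at `z`. -/
theorem hasFDerivAt_kernel_aux (d : ℕ)
    (K : Euc d → ℝ) (Khat Kcheck : ℝ → ℝ)
    (hRS : AssumptionRS d K Khat) (hQM : AssumptionQM Khat Kcheck)
    (hK : Differentiable ℝ K) (z : Euc d) :
    HasFDerivAt K ((-(Kcheck (‖z‖ ^ 2 / 2))) • innerSL ℝ z) z := by
  have hd := (hK z).hasFDerivAt
  by_cases hz : z = 0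
  · subst hz
    have hmax : IsLocalMax K 0 := by
      refine Filter.Eventually.of_forall fun w => ?_
      show K w ≤ K 0
      rw [hRS.radial w, hRS.radial 0]
      apply hQM.antitoneOn
      · simp
      · simp only [Set.mem_Ici]; positivity
      · have : (0:ℝ) ≤ ‖w‖ ^ 2 / 2 := by positivity
        simpa using this
    have h0 := hmax.hasFDerivAt_eq_zero hd
    rw [h0] at hd
    simpa using hd
  · have hu : 0 < ‖z‖ ^ 2 / 2 := by
      have := norm_pos_iff.mpr hz
      positivity
    set c := Kcheck (‖z‖ ^ 2 / 2) with hc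
    have hmin : IsLocalMin (fun w => K w + (c / 2) * ‖w‖ ^ 2) z := by
      refine Filter.Eventually.of_forall fun w => ?_
      have hs := hQM.subdiff _ hu (‖w‖ ^ 2 / 2) (by simp only [Set.mem_Ici]; positivity)
      rw [← hRS.radial w, ← hRS.radial z, ← hc] at hs
      show K z + (c / 2) * ‖z‖ ^ 2 ≤ K w + (c / 2) * ‖w‖ ^ 2
      nlinarith
    have hsq := (hasStrictFDerivAt_norm_sq z).hasFDerivAt
    have h0 := hmin.hasFDerivAt_eq_zero (hd.add (hsq.const_mul (c / 2)))
    have : fderiv ℝ K z = (-c) • innerSL ℝ z := by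
      ext v
      have := DFunLike.congr_fun h0 v
      simp at this ⊢
      linarith
    rwa [this] at hd

/-- Under Assumptions RS and QM, if the kernel `K` is differentiable and
`f̌(y) ≠ 0`, then the KDE `f` is differentiable at `y` and the MS update is a gradient ascent
step with adaptive step size: `m(y) = (h²/f̌(y)) • ∇f(y)`. -/
theorem ms_update_is_gradient_step
    (d n : ℕ) (hd : 0 < d) (hn : 0 < n)
    (K : Euc d → ℝ) (Khat Kcheck : ℝ → ℝ)
    (hRS : AssumptionRS d K Khat) (hQM : AssumptionQM Khat Kcheck)
    (x : Fin n → Euc d) (h : ℝ) (hh : 0 < h)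
    (hK : Differentiable ℝ K)
    (y : Euc d) (hy : fcheck d n Kcheck x h y ≠ 0) :
    DifferentiableAt ℝ (KDE d n K x h) y ∧
    msMap d n Kcheck x h y
      = (h ^ 2 / fcheck d n Kcheck x h y) • gradient (KDE d n K x h) y ∧
    y + msMap d n Kcheck x h y
      = y + (h ^ 2 / fcheck d n Kcheck x h y) • gradient (KDE d n K x h) y := by
  have hnR : (n : ℝ) ≠ 0 := by positivity
  have hhd : h ^ d ≠ 0 := by positivity
  have hh0 : h ≠ 0 := hh.ne'
  set k : Fin n → ℝ := fun i => Kcheck (‖h⁻¹ • (y - x i)‖ ^ 2 / 2) with hk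
  have hgrad : HasGradientAt (KDE d n K x h)
      ((1 / ((n : ℝ) * h ^ d)) • ∑ i : Fin n, (h⁻¹ ^ 2 * k i) • (x i - y)) y := by
    rw [hasGradientAt_iff_hasFDerivAt]
    have hi : ∀ i : Fin n, HasFDerivAt (fun y => K (h⁻¹ • (y - x i)))
        (((-(k i)) • innerSL ℝ (h⁻¹ • (y - x i))).comp
          (h⁻¹ • ContinuousLinearMap.id ℝ (Euc d))) y := fun i =>
      (hasFDerivAt_kernel_aux d K Khat Kcheck hRS hQM hK (h⁻¹ • (y - x i))).comp y
        (((hasFDerivAt_id y).sub_const (x i)).const_smul h⁻¹)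
    have hs := (HasFDerivAt.fun_sum (u := Finset.univ) fun i _ => hi i).const_mul
      (1 / ((n : ℝ) * h ^ d))
    refine hs.congr_fderiv ?_
    refine ContinuousLinearMap.ext fun v => ?_
    rw [InnerProductSpace.toDual_apply_apply, real_inner_smul_left, sum_inner,
      ContinuousLinearMap.smul_apply, ContinuousLinearMap.sum_apply, smul_eq_mul]
    congr 1
    refine Finset.sum_congr rfl fun i _ => ?_
    simp only [ContinuousLinearMap.comp_apply, ContinuousLinearMap.smul_apply,
      ContinuousLinearMap.id_apply, innerSL_apply_apply, real_inner_smul_left,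
      real_inner_smul_right, inner_sub_left, smul_eq_mul]
    ring
  have hm : msMap d n Kcheck x h y
      = (h ^ 2 / fcheck d n Kcheck x h y) • gradient (KDE d n K x h) y := by
    rw [hgrad.gradient]
    have hf : fcheck d n Kcheck x h y = (1 / ((n : ℝ) * h ^ d)) * ∑ i, k i := rfl
    have hS : ∑ i, k i ≠ 0 := by
      intro h0
      apply hy
      rw [hf, h0, mul_zero]
    simp only [msMap, if_neg hy]
    rw [hf]
    simp only [mul_smul, ← Finset.smul_sum]
    rw [smul_smul, smul_smul]
    congr 1
    change (∑ i, k i)⁻¹ = _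
    clear_value k
    field_simp
  exact ⟨hgrad.differentiableAt, hm, by rw [hm]⟩
end
end
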